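/- Let G be a strongly connected directed graph on n vertices with self-loops at every vertex, F_q a finite field with q ≥ n² elements, let the entries A_{uv} for edges (v,u) of G and the coordinates of x be chosen independently and uniformly at random from F_q (other entries of A being zero), and fix r. Then the probability that the n×n Hankel matrix H_n with entries ((A^{a+b-2} x)_r)_{a,b} is invertible is at least 1 − n²/q. -/

import Mathlib

open Matrix

/-- The matrix built from a weight assignment `w` on the edges of the graph `E`
(`E v u` meaning there is an edge from `v` to `u`): the entry `A u v` is the weight
of the edge `(v, u)` if it exists, and `0` otherwise. -/
def graphMat {n : ℕ} {F : Type*} [Field F] (E : Fin n → Fin n → Prop) [DecidableRel E]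
    (w : {p : Fin n × Fin n // E p.1 p.2} → F) : Matrix (Fin n) (Fin n) F :=
  Matrix.of fun u v => if h : E v u then w ⟨(v, u), h⟩ else 0

/-!
The determinant of the Hankel matrix is a polynomial of degree at most `n ^ 2` in the edge weights
and the coordinates of `x`, so by the Schwartz–Zippel lemma it suffices that this polynomial is
nonzero. The Hankel matrix is the product of the observability matrix, with rows `e_rᵀ A ^ a`, and
the Krylov matrix, with columns `A ^ b x`, and the two determinants may be specialized separately.
Put independent variables `d v` on the self-loops. With all other weights zero and `x = 1`, the
Krylov matrix is the Vandermonde matrix of `d`. With weight one on the edges of a spanning tree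
directed towards `r`, each `d v` is an eigenvalue with an eigenvector that does not vanish at `r`,
so the Vandermonde matrix factors through the observability matrix.
-/

section Krylov

variable {V R S : Type*} [Fintype V] [DecidableEq V]

section Semiring

variable [Semiring R] [Semiring S]

/-- The observability matrix of `A` at the coordinate `r`, with `m` rows: row `a` is the `r`-th row
of `A ^ a`. -/
def observabilityMatrix (m : ℕ) (A : Matrix V V R) (r : V) : Matrix (Fin m) V R :=
  Matrix.of fun a v => (A ^ (a : ℕ)) r v

/-- The Krylov matrix of `A` and `x`, with `m` columns: column `b` is `A ^ b *ᵥ x`. -/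
def krylovMatrix (m : ℕ) (A : Matrix V V R) (x : V → R) : Matrix V (Fin m) R :=
  Matrix.of fun v b => (A ^ (b : ℕ) *ᵥ x) v

/-- The `m × m` Hankel matrix of the sequence `k ↦ (A ^ k *ᵥ x) r`. -/
def hankelMatrix (m : ℕ) (A : Matrix V V R) (x : V → R) (r : V) : Matrix (Fin m) (Fin m) R :=
  Matrix.of fun a b => (A ^ ((a : ℕ) + (b : ℕ)) *ᵥ x) r

theorem hankelMatrix_eq_mul (m : ℕ) (A : Matrix V V R) (x : V → R) (r : V) :
    hankelMatrix m A x r = observabilityMatrix m A r * krylovMatrix m A x := by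
  ext a b
  simp only [hankelMatrix, of_apply, pow_add, ← mulVec_mulVec]
  rfl

theorem observabilityMatrix_map (f : R →+* S) (m : ℕ) (A : Matrix V V R) (r : V) :
    (observabilityMatrix m A r).map f = observabilityMatrix m (A.map f) r := by
  ext a v
  simp only [observabilityMatrix, map_apply, of_apply, ← RingHom.mapMatrix_apply, ← map_pow]
  rfl

theorem krylovMatrix_map (f : R →+* S) (m : ℕ) (A : Matrix V V R) (x : V → R) :
    (krylovMatrix m A x).map f = krylovMatrix m (A.map f) (f ∘ x) := by
  ext v b
  simp only [krylovMatrix, map_apply, of_apply, RingHom.map_mulVec, ← RingHom.mapMatrix_apply,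
    map_pow]

theorem hankelMatrix_map (f : R →+* S) (m : ℕ) (A : Matrix V V R) (x : V → R) (r : V) :
    (hankelMatrix m A x r).map f = hankelMatrix m (A.map f) (f ∘ x) r := by
  rw [hankelMatrix_eq_mul, hankelMatrix_eq_mul, Matrix.map_mul, observabilityMatrix_map,
    krylovMatrix_map]

end Semiring

theorem pow_mulVec_eq_smul [CommSemiring R] {A : Matrix V V R} {y : V → R} {c : R}
    (h : A *ᵥ y = c • y) (k : ℕ) : A ^ k *ᵥ y = c ^ k • y := by
  induction k with
  | zero => simp
  | succ k ih => rw [pow_succ, ← mulVec_mulVec, h, mulVec_smul, ih, smul_smul, pow_succ']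

variable [CommRing R]

theorem krylovMatrix_diagonal_one {n : ℕ} (d : Fin n → R) :
    krylovMatrix n (diagonal d) 1 = vandermonde d := by
  ext v b
  simp [krylovMatrix, diagonal_pow, mulVec_diagonal, vandermonde_apply]

theorem det_observabilityMatrix_ne_zero [IsDomain R] {n : ℕ} {A : Matrix (Fin n) (Fin n) R}
    {r : Fin n} {d : Fin n → R} (hd : Function.Injective d)
    (h : ∀ v, ∃ y : Fin n → R, A *ᵥ y = d v • y ∧ y r ≠ 0) :
    (observabilityMatrix n A r).det ≠ 0 := by
  choose y hy hyr using h
  have hmul : observabilityMatrix n A r * of (fun u v => y v u) =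
      (vandermonde d)ᵀ * diagonal fun v => y v r := by
    ext a v
    rw [mul_diagonal, transpose_apply, vandermonde_apply]
    exact congrFun (pow_mulVec_eq_smul (hy v) a) r
  have hright : ((vandermonde d)ᵀ * diagonal fun v => y v r).det ≠ 0 := by
    rw [det_mul, det_transpose, det_diagonal]
    exact mul_ne_zero (det_vandermonde_ne_zero_iff.2 hd)
      (Finset.prod_ne_zero_iff.2 fun v _ => hyr v)
  rw [← hmul, det_mul] at hright
  exact left_ne_zero_of_mul hright

end Krylov

section SpanningTree

theorem exists_parent_depth_lt {V : Type*} {E : V → V → Prop} {r : V}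
    (h : ∀ v, Relation.ReflTransGen E v r) :
    ∃ (parent : V → V) (depth : V → ℕ),
      ∀ v, v ≠ r → E v (parent v) ∧ depth (parent v) < depth v := by
  classical
  let reachesIn (k : ℕ) : Set V := (fun s => {v | ∃ w ∈ s, E v w})^[k] {r}
  have reachesIn_succ (k : ℕ) : reachesIn (k + 1) = {v | ∃ w ∈ reachesIn k, E v w} :=
    Function.iterate_succ_apply' _ k {r}
  have exists_reachesIn (v : V) : ∃ k, v ∈ reachesIn k := by
    induction h v using Relation.ReflTransGen.head_induction_on with
    | refl => exact ⟨0, rfl⟩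
    | head hvw _ ih =>
      obtain ⟨k, hk⟩ := ih
      exact ⟨k + 1, reachesIn_succ k ▸ ⟨_, hk, hvw⟩⟩
  let depth (v : V) : ℕ := Nat.find (exists_reachesIn v)
  have exists_closer (v : V) : ∃ w, v ≠ r → E v w ∧ depth w < depth v := by
    have hv : v ∈ reachesIn (depth v) := Nat.find_spec (exists_reachesIn v)
    cases hdepth : depth v with
    | zero =>
      rw [hdepth] at hv
      exact ⟨v, fun hvr => absurd hv hvr⟩
    | succ k =>
      rw [hdepth, reachesIn_succ] at hv
      obtain ⟨w, hw, hvw⟩ := hv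
      exact ⟨w, fun _ => ⟨hvw, Nat.lt_succ_of_le (Nat.find_min' (exists_reachesIn w) hw)⟩⟩
  choose parent hparent using exists_closer
  exact ⟨parent, depth, hparent⟩

variable {V R : Type*} [DecidableEq V]

/-- The matrix of a tree rooted at `r` with self-loops, in the convention that column `v` holds the
edges leaving `v`: each self-loop at `v` has weight `d v`, and each edge from a non-root vertex to
its parent has weight one. -/
def treeMatrix [Semiring R] (parent : V → V) (r : V) (d : V → R) : Matrix V V R :=
  diagonal d + Matrix.of fun u v => if v ≠ r ∧ u = parent v then 1 else 0

variable [Fintype V] {parent : V → V} {r : V}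

theorem treeMatrix_mulVec_single_root [Semiring R] (d : V → R) :
    treeMatrix parent r d *ᵥ Pi.single r 1 = d r • Pi.single r 1 := by
  ext u
  simp +contextual [treeMatrix, diagonal_apply, Pi.single_apply]

theorem treeMatrix_mulVec_single_of_ne [Semiring R] {v : V} (hv : v ≠ r) (d : V → R) :
    treeMatrix parent r d *ᵥ Pi.single v 1 = d v • Pi.single v 1 + Pi.single (parent v) 1 := by
  ext u
  simp +contextual [treeMatrix, diagonal_apply, Pi.single_apply, hv]

variable [CommRing R]

/-- Up to the factor `a`, which clears denominators, `z` is the column `u` of the resolvent of the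
tree matrix at `c`. The factor `c - d u` is kept apart so that it vanishes at `c = d u`. -/
theorem exists_treeMatrix_mulVec_eq_smul_sub {depth : V → ℕ}
    (hdepth : ∀ v, v ≠ r → depth (parent v) < depth v) (d : V → R) (c : R) (u : V) :
    ∃ (a : R) (z : V → R),
      treeMatrix parent r d *ᵥ z = c • z - (a * (c - d u)) • Pi.single u 1 ∧ z r = 1 := by
  induction u using (measure depth).wf.induction with
  | _ u ih =>
    by_cases hu : u = r
    · subst hu
      refine ⟨1, Pi.single u 1, ?_, Pi.single_eq_same u 1⟩
      rw [treeMatrix_mulVec_single_root]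
      module
    · obtain ⟨a, z, hz, hzr⟩ := ih (parent u) (hdepth u hu)
      refine ⟨a * (c - d (parent u)), z + (a * (c - d (parent u))) • Pi.single u 1, ?_, ?_⟩
      · rw [mulVec_add, mulVec_smul, hz, treeMatrix_mulVec_single_of_ne hu]
        module
      · simp [hzr, Pi.single_eq_of_ne' hu]

theorem exists_treeMatrix_eigenvector {depth : V → ℕ}
    (hdepth : ∀ v, v ≠ r → depth (parent v) < depth v) (d : V → R) (v : V) :
    ∃ y : V → R, treeMatrix parent r d *ᵥ y = d v • y ∧ y r = 1 := by
  obtain ⟨a, y, hy, hyr⟩ := exists_treeMatrix_mulVec_eq_smul_sub hdepth d (d v) v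
  exact ⟨y, by simpa using hy, hyr⟩

end SpanningTree

section WeightMatrix

/-- The type of edges of the digraph with adjacency relation `E`, as pairs (source, target). -/
abbrev Edge {V : Type*} (E : V → V → Prop) : Type _ :=
  {p : V × V // E p.1 p.2}

variable {V R S : Type*} (E : V → V → Prop) [DecidableRel E]

/-- The matrix `graphMat` of edge weights, over an arbitrary vertex type and with weights in any
type with a zero, so that the weights may be polynomials. -/
def weightMatrix [Zero R] (w : Edge E → R) : Matrix V V R :=
  Matrix.of fun u v => if h : E v u then w ⟨(v, u), h⟩ else 0

theorem weightMatrix_map [Zero R] [Zero S] {f : R → S} (hf : f 0 = 0) (w : Edge E → R) :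
    (weightMatrix E w).map f = weightMatrix E (f ∘ w) := by
  ext u v
  simp only [weightMatrix, map_apply, of_apply, apply_dite f, hf, Function.comp_apply]

variable {E}

theorem weightMatrix_of_entries [Zero R] {M : Matrix V V R} (hM : ∀ u v, ¬E v u → M u v = 0) :
    weightMatrix E (fun e => M e.1.2 e.1.1) = M := by
  ext u v
  by_cases h : E v u
  · simp [weightMatrix, h]
  · simp [weightMatrix, h, hM u v h]

variable [DecidableEq V]

theorem exists_weightMatrix_eq_diagonal [Zero R] (hloop : ∀ v, E v v) (d : V → R) :
    ∃ w, weightMatrix E w = diagonal d :=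
  ⟨_, weightMatrix_of_entries fun u _ huv => diagonal_apply_ne d fun h => huv (h ▸ hloop u)⟩

theorem exists_weightMatrix_eq_treeMatrix [Semiring R] {parent : V → V} {r : V} (hloop : ∀ v, E v v)
    (hparent : ∀ v, v ≠ r → E v (parent v)) (d : V → R) :
    ∃ w, weightMatrix E w = treeMatrix parent r d := by
  refine ⟨_, weightMatrix_of_entries fun u v huv => ?_⟩
  have hne : u ≠ v := fun h => huv (h ▸ hloop u)
  have hnot : ¬(v ≠ r ∧ u = parent v) := fun ⟨hv, hu⟩ => huv (hu ▸ hparent v hv)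
  simp [treeMatrix, hne, hnot]

variable [CommRing R] [IsDomain R]

theorem exists_det_observabilityMatrix_weightMatrix_ne_zero {n : ℕ}
    {E : Fin n → Fin n → Prop} [DecidableRel E] {r : Fin n}
    (hreach : ∀ v, Relation.ReflTransGen E v r) (hloop : ∀ v, E v v) {d : Fin n → R}
    (hd : Function.Injective d) :
    ∃ w : Edge E → R, (observabilityMatrix n (weightMatrix E w) r).det ≠ 0 := by
  obtain ⟨parent, depth, hparent⟩ := exists_parent_depth_lt hreach
  obtain ⟨w, hw⟩ := exists_weightMatrix_eq_treeMatrix hloop (fun v hv => (hparent v hv).1) d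
  refine ⟨w, hw ▸ det_observabilityMatrix_ne_zero hd fun v => ?_⟩
  obtain ⟨y, hy, hyr⟩ := exists_treeMatrix_eigenvector (fun v hv => (hparent v hv).2) d v
  exact ⟨y, hy, hyr ▸ one_ne_zero⟩

theorem exists_det_krylovMatrix_weightMatrix_ne_zero {n : ℕ}
    {E : Fin n → Fin n → Prop} [DecidableRel E] (hloop : ∀ v, E v v) {d : Fin n → R}
    (hd : Function.Injective d) :
    ∃ (w : Edge E → R) (x : Fin n → R), (krylovMatrix n (weightMatrix E w) x).det ≠ 0 := by
  obtain ⟨w, hw⟩ := exists_weightMatrix_eq_diagonal hloop d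
  refine ⟨w, 1, ?_⟩
  rw [hw, krylovMatrix_diagonal_one]
  exact det_vandermonde_ne_zero_iff.2 hd

end WeightMatrix

section TotalDegree

open MvPolynomial

variable {σ ι R : Type*} [Fintype ι] [DecidableEq ι]

theorem totalDegree_det_le [CommRing R] {M : Matrix ι ι (MvPolynomial σ R)} {f g : ι → ℕ}
    (hM : ∀ i j, (M i j).totalDegree ≤ f i + g j) :
    M.det.totalDegree ≤ ∑ i, f i + ∑ i, g i := by
  rw [det_apply]
  refine totalDegree_finsetSum_le fun τ _ => ?_
  calc (Equiv.Perm.sign τ • ∏ i, M (τ i) i).totalDegree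
      ≤ (∏ i, M (τ i) i).totalDegree := totalDegree_smul_le _ _
    _ ≤ ∑ i, (M (τ i) i).totalDegree := totalDegree_finsetProd _ _
    _ ≤ ∑ i, (f (τ i) + g i) := Finset.sum_le_sum fun i _ => hM _ _
    _ = ∑ i, f i + ∑ i, g i := by rw [Finset.sum_add_distrib, Equiv.sum_comp τ f]

theorem totalDegree_pow_mulVec_le [CommSemiring R] {A : Matrix ι ι (MvPolynomial σ R)}
    {x : ι → MvPolynomial σ R} {a b : ℕ} (hA : ∀ i j, (A i j).totalDegree ≤ a)
    (hx : ∀ i, (x i).totalDegree ≤ b) (k : ℕ) (i : ι) :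
    ((A ^ k *ᵥ x) i).totalDegree ≤ k * a + b := by
  induction k generalizing i with
  | zero => simpa using hx i
  | succ k ih =>
    rw [pow_succ', ← mulVec_mulVec]
    refine totalDegree_finsetSum_le fun j _ => ?_
    calc (A i j * (A ^ k *ᵥ x) j).totalDegree
        ≤ (A i j).totalDegree + ((A ^ k *ᵥ x) j).totalDegree := totalDegree_mul _ _
      _ ≤ a + (k * a + b) := add_le_add (hA i j) (ih j)
      _ = (k + 1) * a + b := by ring

theorem totalDegree_det_hankelMatrix_le [CommRing R] {A : Matrix ι ι (MvPolynomial σ R)}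
    {x : ι → MvPolynomial σ R} (hA : ∀ i j, (A i j).totalDegree ≤ 1)
    (hx : ∀ i, (x i).totalDegree ≤ 1) (m : ℕ) (r : ι) :
    (hankelMatrix m A x r).det.totalDegree ≤ m ^ 2 := by
  have hentry (a b : Fin m) : (hankelMatrix m A x r a b).totalDegree ≤ (a : ℕ) + (b + 1) := by
    simpa [hankelMatrix, add_assoc] using totalDegree_pow_mulVec_le hA hx (a + b) r
  have hsum : ∑ a : Fin m, (a : ℕ) + ∑ b : Fin m, ((b : ℕ) + 1) = m ^ 2 := by
    rw [Fin.sum_univ_eq_sum_range fun a => a, Fin.sum_univ_eq_sum_range fun b => b + 1,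
      ← Finset.sum_add_distrib]
    clear hentry
    induction m with
    | zero => rfl
    | succ m ih => rw [Finset.sum_range_succ, ih]; ring
  exact hsum ▸ totalDegree_det_le hentry

end TotalDegree

section SchwartzZippel

open MvPolynomial Finset

variable {σ R : Type*} [Fintype σ] [DecidableEq σ] [CommRing R] [IsDomain R] [DecidableEq R]
  {p : MvPolynomial σ R}

theorem card_filter_eval_eq_zero_div_le (hp : p ≠ 0) (S : Finset R) :
    (#{f ∈ Fintype.piFinset fun _ : σ => S | eval f p = 0} : ℝ) / #S ^ Fintype.card σ ≤
      p.totalDegree / #S := by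
  let e := Fintype.equivFin σ
  have hrename : renameEquiv R e p ≠ 0 := (map_ne_zero_iff _ (renameEquiv R e).injective).2 hp
  have hcard : #{f ∈ Fintype.piFinset fun _ : σ => S | eval f p = 0} =
      #{f ∈ Fintype.piFinset fun _ => S | eval f (renameEquiv R e p) = 0} :=
    card_equiv (e.arrowCongr (Equiv.refl R)) fun f => by
      have hf : e.arrowCongr (Equiv.refl R) f ∘ e = f := by ext i; simp
      simp [eval_rename, hf, e.symm.forall_congr_left]
  rw [hcard, ← totalDegree_renameEquiv e p]
  simpa using (NNRat.cast_le (K := ℝ)).2 (schwartz_zippel_totalDegree hrename S)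

theorem one_sub_totalDegree_div_card_le_card_filter_div (hp : p ≠ 0) {S : Finset R}
    (hS : S.Nonempty) :
    1 - (p.totalDegree : ℝ) / #S ≤
      #{f ∈ Fintype.piFinset fun _ : σ => S | eval f p ≠ 0} / (#S : ℝ) ^ Fintype.card σ := by
  have hsplit : (#{f ∈ Fintype.piFinset fun _ : σ => S | eval f p = 0} : ℝ) +
      #{f ∈ Fintype.piFinset fun _ : σ => S | eval f p ≠ 0} = (#S : ℝ) ^ Fintype.card σ := by
    exact_mod_cast (card_filter_add_card_filter_not (fun f : σ → R => eval f p = 0)).trans (by simp)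
  have hpos : (0 : ℝ) < (#S : ℝ) ^ Fintype.card σ := pow_pos (Nat.cast_pos.2 hS.card_pos) _
  rw [← eq_sub_iff_add_eq'] at hsplit
  rw [hsplit, sub_div, div_self hpos.ne']
  exact sub_le_sub_left (card_filter_eval_eq_zero_div_le hp S) 1

end SchwartzZippel

section HankelPolynomial

open MvPolynomial

/-- The weight matrix of `E` whose edge weights are independent variables; the variables indexed by
`V` are reserved for `genericVector`. -/
noncomputable def genericMatrix {V : Type*} (R : Type*) [CommSemiring R] (E : V → V → Prop)
    [DecidableRel E] : Matrix V V (MvPolynomial (Edge E ⊕ V) R) :=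
  weightMatrix E fun e => X (Sum.inl e)

/-- The vector whose coordinates are independent variables, distinct from the edge weights of
`genericMatrix`. -/
noncomputable def genericVector {V : Type*} (R : Type*) [CommSemiring R] (E : V → V → Prop) :
    V → MvPolynomial (Edge E ⊕ V) R :=
  fun v => X (Sum.inr v)

/-- The determinant of the Hankel matrix as a polynomial in the edge weights of the digraph `E` and
the coordinates of the starting vector. -/
noncomputable def hankelPolynomial {n : ℕ} (R : Type*) [CommRing R] (E : Fin n → Fin n → Prop)
    [DecidableRel E] (r : Fin n) : MvPolynomial (Edge E ⊕ Fin n) R :=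
  (hankelMatrix n (genericMatrix R E) (genericVector R E) r).det

section Specialization

variable {V R S : Type*} [CommSemiring R] [CommSemiring S] {E : V → V → Prop}

theorem genericMatrix_map_eval₂Hom [DecidableRel E] (f : R →+* S) (w : Edge E → S) (x : V → S) :
    (genericMatrix R E).map (eval₂Hom f (Sum.elim w x)) = weightMatrix E w := by
  rw [genericMatrix, weightMatrix_map E (map_zero _)]
  congr 1
  ext e
  simp

theorem eval₂Hom_comp_genericVector (f : R →+* S) (w : Edge E → S) (x : V → S) :
    eval₂Hom f (Sum.elim w x) ∘ genericVector R E = x := by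
  ext v
  simp [genericVector]

end Specialization

variable {n : ℕ} {R : Type*} [CommRing R] {E : Fin n → Fin n → Prop} [DecidableRel E] {r : Fin n}

theorem eval_hankelPolynomial (w : Edge E → R) (x : Fin n → R) (r : Fin n) :
    eval (Sum.elim w x) (hankelPolynomial R E r) = (hankelMatrix n (weightMatrix E w) x r).det := by
  change eval₂Hom (RingHom.id R) (Sum.elim w x) _ = _
  rw [hankelPolynomial, RingHom.map_det, RingHom.mapMatrix_apply, hankelMatrix_map,
    genericMatrix_map_eval₂Hom, eval₂Hom_comp_genericVector]

theorem totalDegree_hankelPolynomial_le [Nontrivial R] (E : Fin n → Fin n → Prop) [DecidableRel E]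
    (r : Fin n) : (hankelPolynomial R E r).totalDegree ≤ n ^ 2 := by
  refine totalDegree_det_hankelMatrix_le (fun u v => ?_) (fun v => (totalDegree_X _).le) n r
  by_cases h : E v u <;> simp [genericMatrix, weightMatrix, h]

variable [IsDomain R]

theorem det_observabilityMatrix_genericMatrix_ne_zero
    (hreach : ∀ v, Relation.ReflTransGen E v r) (hloop : ∀ v, E v v) :
    (observabilityMatrix n (genericMatrix R E) r).det ≠ 0 := by
  obtain ⟨w, hw⟩ := exists_det_observabilityMatrix_weightMatrix_ne_zero hreach hloop
    (X_injective (σ := Fin n) (R := R))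
  have hmap : eval₂Hom C (Sum.elim w 0) (observabilityMatrix n (genericMatrix R E) r).det =
      (observabilityMatrix n (weightMatrix E w) r).det := by
    rw [RingHom.map_det, RingHom.mapMatrix_apply, observabilityMatrix_map,
      genericMatrix_map_eval₂Hom]
  exact ne_zero_of_map (hmap ▸ hw)

theorem det_krylovMatrix_generic_ne_zero (hloop : ∀ v, E v v) :
    (krylovMatrix n (genericMatrix R E) (genericVector R E)).det ≠ 0 := by
  obtain ⟨w, x, hwx⟩ := exists_det_krylovMatrix_weightMatrix_ne_zero hloop
    (X_injective (σ := Fin n) (R := R))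
  have hmap : eval₂Hom C (Sum.elim w x)
      (krylovMatrix n (genericMatrix R E) (genericVector R E)).det =
        (krylovMatrix n (weightMatrix E w) x).det := by
    rw [RingHom.map_det, RingHom.mapMatrix_apply, krylovMatrix_map, genericMatrix_map_eval₂Hom,
      eval₂Hom_comp_genericVector]
  exact ne_zero_of_map (hmap ▸ hwx)

theorem hankelPolynomial_ne_zero
    (hreach : ∀ v, Relation.ReflTransGen E v r) (hloop : ∀ v, E v v) :
    hankelPolynomial R E r ≠ 0 := by
  rw [hankelPolynomial, hankelMatrix_eq_mul, det_mul]
  exact mul_ne_zero (det_observabilityMatrix_genericMatrix_ne_zero hreach hloop)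
    (det_krylovMatrix_generic_ne_zero hloop)

end HankelPolynomial

open Finset in
theorem hankel_invertible_prob_general {n : ℕ} {R : Type*} [CommRing R] [IsDomain R]
    [DecidableEq R] {S : Finset R} (hS : S.Nonempty) {E : Fin n → Fin n → Prop} [DecidableRel E]
    {r : Fin n} (hreach : ∀ v, Relation.ReflTransGen E v r) (hloop : ∀ v, E v v) :
    1 - (n ^ 2 : ℝ) / #S ≤
      #{ω ∈ (Fintype.piFinset fun _ : Edge E => S) ×ˢ (Fintype.piFinset fun _ : Fin n => S) |
          (hankelMatrix n (weightMatrix E ω.1) ω.2 r).det ≠ 0} /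
        (#S : ℝ) ^ Fintype.card (Edge E ⊕ Fin n) := by
  have hcard :
      #{ω ∈ (Fintype.piFinset fun _ : Edge E => S) ×ˢ (Fintype.piFinset fun _ : Fin n => S) |
          (hankelMatrix n (weightMatrix E ω.1) ω.2 r).det ≠ 0} =
        #{f ∈ Fintype.piFinset fun _ : Edge E ⊕ Fin n => S |
          MvPolynomial.eval f (hankelPolynomial R E r) ≠ 0} := by
    refine card_equiv (Equiv.sumArrowEquivProdArrow _ _ _).symm fun ω => ?_
    have hω : (Equiv.sumArrowEquivProdArrow _ _ _).symm ω = Sum.elim ω.1 ω.2 := rfl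
    simp [hω, eval_hankelPolynomial]
  calc 1 - (n ^ 2 : ℝ) / #S
      ≤ 1 - ((hankelPolynomial R E r).totalDegree : ℝ) / #S := by
        gcongr
        exact_mod_cast totalDegree_hankelPolynomial_le E r
    _ ≤ _ :=
        hcard ▸ one_sub_totalDegree_div_card_le_card_filter_div
          (hankelPolynomial_ne_zero hreach hloop) hS

/-- For a strongly connected digraph with self-loops on `n` vertices, over a finite field
with `q ≥ n²` elements, if the edge weights of `A` and the entries of `x` are i.i.d.
uniform, then for a fixed node `r` the probability (fraction of outcomes) that the
`n × n` Hankel matrix `(A^(a+b-2) x)_r` is invertible is at least `1 - n²/q`. -/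
theorem hankel_invertible_prob {n : ℕ} {F : Type*} [Field F] [Fintype F] [DecidableEq F]
    (E : Fin n → Fin n → Prop) [DecidableRel E]
    (hconn : ∀ u v : Fin n, Relation.ReflTransGen E u v)
    (hloop : ∀ v : Fin n, E v v)
    (hq : n ^ 2 ≤ Fintype.card F) (r : Fin n) :
    1 - (n ^ 2 : ℝ) / Fintype.card F ≤
      ((Finset.univ.filter fun ω : ({p : Fin n × Fin n // E p.1 p.2} → F) × (Fin n → F) =>
          (Matrix.det (Matrix.of fun a b : Fin n =>
            ((graphMat E ω.1 ^ ((a : ℕ) + (b : ℕ))) *ᵥ ω.2) r)) ≠ 0).card : ℝ)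
        / Fintype.card (({p : Fin n × Fin n // E p.1 p.2} → F) × (Fin n → F)) := by
  have h := hankel_invertible_prob_general (Finset.univ_nonempty (α := F)) (hconn · r) hloop
  rw [Fintype.piFinset_univ, Fintype.piFinset_univ, Finset.univ_product_univ, Finset.card_univ] at h
  rw [← Fintype.card_congr (Equiv.sumArrowEquivProdArrow _ _ F), Fintype.card_fun, Nat.cast_pow]
  -- `weightMatrix` and `hankelMatrix` unfold to the expressions of the statement.
  exact h
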